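/- Let Ξ₀ be a holomorphic function on the punctured unit disc B₁* having finite order n ∈ ℤ at 0, i.e. the function Ξ̃₀(z) := z^{-n}Ξ₀(z) extends holomorphically to the open unit disc with Ξ̃₀(0) ≠ 0. Let u : B₁* → ℝ be a C² function satisfying Δu(z) = 16 |Ξ₀(z)|² e^{2u(z)} on B₁*. Then either (i) there exists β < n+1 such that the function v(z) := u(z) + β·log|z| extends to a continuous function on the open unit disc, or (ii) the function ṽ(z) := u(z) + (n+1)·log|z| + log|log|z|| extends to a continuous function on the open unit disc whose value at 0 equals −2·log 2 − log|Ξ̃₀(0)|. -/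

import Mathlib

open Complex Real Set Topology Filter

/-- Partial derivative in the `x`-direction of a function on `ℂ ≅ ℝ²`. -/
noncomputable def pdx (f : ℂ → ℝ) (z : ℂ) : ℝ := deriv (fun t : ℝ => f (z + t)) 0

/-- Partial derivative in the `y`-direction. -/
noncomputable def pdy (f : ℂ → ℝ) (z : ℂ) : ℝ := deriv (fun t : ℝ => f (z + t * Complex.I)) 0

/-- The flat Laplacian `Δ = ∂²/∂x² + ∂²/∂y²`. -/
noncomputable def lap (f : ℂ → ℝ) (z : ℂ) : ℝ := pdx (pdx f) z + pdy (pdy f) z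

/-- The punctured open unit disc `B₁* = {0 < |z| < 1}`. -/
def PDisc : Set ℂ := {z : ℂ | 0 < ‖z‖ ∧ ‖z‖ < 1}

/-!
Near the puncture use the coordinate `w = -log z` on a half-plane, in which the equation for
`U = u - (n + 1) Re w + const` becomes `ΔU = H e ^ {2U}` with `H → 1` and `U` is `2πi`-periodic.
The Keller–Osserman bound on large discs forces `U → -∞`, hence `ΔU → 0`. Every nonconstant
Fourier mode `g` of `U` on vertical segments then satisfies `g'' = k ^ 2 g + o(1)` with
subexponential growth, so it decays like `o(1) / k ^ 2`; summing over `k`, `U` is asymptotic to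
its vertical mean `M`. Finally `M'' ~ e ^ {2M}`, and comparing `M' ^ 2` with `e ^ {2M}` by
L'Hôpital gives `M' ^ 2 - a ^ 2 ~ e ^ {2M}` with `a = -lim M' ≥ 0`. If `a > 0` then `M + a t`
converges, which is the conical case `β = n + 1 - a`; if `a = 0` then `(e ^ {-M})' → 1`, so
`M + log t → 0`, the cusp.
-/

/-! ### Derivatives along the axes and the Laplacian -/

section

variable {f g : ℂ → ℝ} {z : ℂ}

lemma pdx_eq_lineDeriv (f : ℂ → ℝ) (z : ℂ) : pdx f z = lineDeriv ℝ f z 1 := by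
  simp [pdx, lineDeriv]

lemma pdy_eq_lineDeriv (f : ℂ → ℝ) (z : ℂ) : pdy f z = lineDeriv ℝ f z Complex.I := by
  simp [pdy, lineDeriv]

lemma pdx_eq_fderiv (hf : DifferentiableAt ℝ f z) : pdx f z = fderiv ℝ f z 1 := by
  rw [pdx_eq_lineDeriv, hf.lineDeriv_eq_fderiv]

lemma pdy_eq_fderiv (hf : DifferentiableAt ℝ f z) : pdy f z = fderiv ℝ f z Complex.I := by
  rw [pdy_eq_lineDeriv, hf.lineDeriv_eq_fderiv]

lemma eventually_differentiableAt (hf : ContDiffAt ℝ 1 f z) : ∀ᶠ w in 𝓝 z, DifferentiableAt ℝ f w :=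
  (hf.eventually (by simp)).mono fun _ hw => hw.differentiableAt one_ne_zero

lemma pdx_eventuallyEq_fderiv (hf : ContDiffAt ℝ 1 f z) : pdx f =ᶠ[𝓝 z] fun w => fderiv ℝ f w 1 :=
  (eventually_differentiableAt hf).mono fun _ => pdx_eq_fderiv

lemma pdy_eventuallyEq_fderiv (hf : ContDiffAt ℝ 1 f z) :
    pdy f =ᶠ[𝓝 z] fun w => fderiv ℝ f w Complex.I :=
  (eventually_differentiableAt hf).mono fun _ => pdy_eq_fderiv

lemma contDiffAt_pdx {m n : WithTop ℕ∞} (hf : ContDiffAt ℝ n f z)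
    (hmn : m + 1 ≤ n) : ContDiffAt ℝ m (pdx f) z :=
  ((hf.fderiv_right hmn).clm_apply contDiffAt_const).congr_of_eventuallyEq
    (pdx_eventuallyEq_fderiv (hf.of_le (le_add_self.trans hmn)))

lemma contDiffAt_pdy {m n : WithTop ℕ∞} (hf : ContDiffAt ℝ n f z)
    (hmn : m + 1 ≤ n) : ContDiffAt ℝ m (pdy f) z :=
  ((hf.fderiv_right hmn).clm_apply contDiffAt_const).congr_of_eventuallyEq
    (pdy_eventuallyEq_fderiv (hf.of_le (le_add_self.trans hmn)))

lemma continuousAt_pdx (hf : ContDiffAt ℝ 1 f z) : ContinuousAt (pdx f) z :=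
  (contDiffAt_pdx (m := 0) hf (zero_add 1).le).continuousAt

lemma continuousAt_pdy (hf : ContDiffAt ℝ 1 f z) : ContinuousAt (pdy f) z :=
  (contDiffAt_pdy (m := 0) hf (zero_add 1).le).continuousAt

lemma continuousAt_lap (hf : ContDiffAt ℝ 2 f z) : ContinuousAt (lap f) z :=
  (continuousAt_pdx (contDiffAt_pdx hf one_add_one_eq_two.le)).add
    (continuousAt_pdy (contDiffAt_pdy hf one_add_one_eq_two.le))

lemma hasDerivAt_pdx {t y : ℝ} (hf : DifferentiableAt ℝ f (t + y * Complex.I)) :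
    HasDerivAt (fun s : ℝ => f (s + y * Complex.I)) (pdx f (t + y * Complex.I)) t := by
  have hline : HasDerivAt (fun s : ℝ => (s : ℂ) + y * Complex.I) 1 t :=
    (hasDerivAt_id t).ofReal_comp.add_const _
  rw [pdx_eq_fderiv hf]
  exact hf.hasFDerivAt.comp_hasDerivAt t hline

lemma hasDerivAt_pdy {x t : ℝ} (hf : DifferentiableAt ℝ f (x + t * Complex.I)) :
    HasDerivAt (fun s : ℝ => f (x + s * Complex.I)) (pdy f (x + t * Complex.I)) t := by
  have hline : HasDerivAt (fun s : ℝ => (x : ℂ) + s * Complex.I) Complex.I t := by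
    simpa using ((hasDerivAt_id t).ofReal_comp.mul_const Complex.I).const_add (x : ℂ)
  rw [pdy_eq_fderiv hf]
  exact hf.hasFDerivAt.comp_hasDerivAt t hline

lemma lap_eq_deriv_deriv (f : ℂ → ℝ) (z : ℂ) :
    lap f z = deriv (deriv fun t : ℝ => f (z + t)) 0
      + deriv (deriv fun t : ℝ => f (z + t * Complex.I)) 0 := by
  have hx (t : ℝ) : pdx f (z + t) = deriv (fun s : ℝ => f (z + s)) t := by
    simpa [pdx, add_assoc] using deriv_comp_const_add (fun s : ℝ => f (z + s)) t 0
  have hy (t : ℝ) :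
      pdy f (z + t * Complex.I) = deriv (fun s : ℝ => f (z + s * Complex.I)) t := by
    simpa [pdy, add_assoc, add_mul] using
      deriv_comp_const_add (fun s : ℝ => f (z + s * Complex.I)) t 0
  simp only [lap, pdx, pdy] at hx hy ⊢
  simp_rw [hx, hy]

lemma lap_eq_fderiv_fderiv (hf : ContDiffAt ℝ 2 f z) :
    lap f z = fderiv ℝ (fderiv ℝ f) z 1 1
      + fderiv ℝ (fderiv ℝ f) z Complex.I Complex.I := by
  have hf1 : ContDiffAt ℝ 1 f z := hf.of_le (by norm_num)
  have hDf : DifferentiableAt ℝ (fderiv ℝ f) z :=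
    (hf.fderiv_right (m := 1) (by norm_num)).differentiableAt one_ne_zero
  have happly (e : ℂ) :
      lineDeriv ℝ (fun w => fderiv ℝ f w e) z e = fderiv ℝ (fderiv ℝ f) z e e := by
    simpa using ((hDf.hasFDerivAt.clm_apply (hasFDerivAt_const e z)).hasLineDerivAt e).lineDeriv
  rw [lap, pdx_eq_lineDeriv, pdy_eq_lineDeriv, (pdx_eventuallyEq_fderiv hf1).lineDeriv_eq,
    (pdy_eventuallyEq_fderiv hf1).lineDeriv_eq, happly, happly]

lemma lap_eq_laplacian (hf : ContDiffAt ℝ 2 f z) : lap f z = Laplacian.laplacian f z := by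
  simp [lap_eq_fderiv_fderiv hf, InnerProductSpace.laplacian_eq_iteratedFDeriv_complexPlane,
    iteratedFDeriv_two_apply]

lemma lap_add (hf : ContDiffAt ℝ 2 f z) (hg : ContDiffAt ℝ 2 g z) :
    lap (f + g) z = lap f z + lap g z := by
  have hfg : ContDiffAt ℝ 2 (f + g) z := hf.add hg
  rw [lap_eq_laplacian hfg, lap_eq_laplacian hf, lap_eq_laplacian hg, hf.laplacian_add hg]

lemma contDiff_affine_re (b c : ℝ) {n : WithTop ℕ∞} : ContDiff ℝ n fun w : ℂ => b * w.re + c :=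
  (contDiff_const.mul reCLM.contDiff).add contDiff_const

lemma lap_affine_re (b c : ℝ) (z : ℂ) : lap (fun w => b * w.re + c) z = 0 := by
  rw [lap_eq_deriv_deriv]
  simp

end

/-! ### Conformal change of variable -/

section

variable {u : ℂ → ℝ} {φ : ℂ → ℂ} {w : ℂ}

lemma bilin_mul_add_bilin_mul_I (B : ℂ →L[ℝ] ℂ →L[ℝ] ℝ) (ζ : ℂ) :
    B ζ ζ + B (ζ * Complex.I) (ζ * Complex.I)
      = ‖ζ‖ ^ 2 * (B 1 1 + B Complex.I Complex.I) := by
  have hζ : ζ = ζ.re • (1 : ℂ) + ζ.im • Complex.I := by simp [re_add_im]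
  have hζI : ζ * Complex.I = ζ.re • Complex.I - ζ.im • (1 : ℂ) := by
    apply Complex.ext <;> simp
  rw [hζI, Complex.sq_norm, Complex.normSq_apply]
  conv_lhs => rw [hζ]
  simp only [map_add, map_sub, map_smul, add_apply, sub_apply, smul_apply, smul_eq_mul,
    add_re, add_im, smul_re, smul_im, one_re, one_im, I_re, I_im]
  ring

lemma fderiv_comp_analytic (hu : DifferentiableAt ℝ u (φ w)) (hφ : DifferentiableAt ℂ φ w) (e : ℂ) :
    fderiv ℝ (u ∘ φ) w e = fderiv ℝ u (φ w) (deriv φ w * e) := by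
  rw [(hu.hasFDerivAt.comp w (hφ.hasDerivAt.hasFDerivAt.restrictScalars ℝ)).fderiv]
  simp [mul_comm]

lemma contDiffAt_comp_analytic {n : WithTop ℕ∞}
    (hu : ContDiffAt ℝ n u (φ w)) (hφ : AnalyticAt ℂ φ w) : ContDiffAt ℝ n (u ∘ φ) w :=
  hu.comp w (hφ.contDiffAt.restrict_scalars ℝ)

lemma fderiv_fderiv_comp_analytic (hu : ContDiffAt ℝ 2 u (φ w)) (hφ : AnalyticAt ℂ φ w) (e : ℂ) :
    fderiv ℝ (fderiv ℝ (u ∘ φ)) w e e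
      = fderiv ℝ (fderiv ℝ u) (φ w) (deriv φ w * e) (deriv φ w * e)
        + fderiv ℝ u (φ w) (deriv (deriv φ) w * e * e) := by
  have huφ := (contDiffAt_comp_analytic hu hφ).fderiv_right (m := 1) (by norm_num)
  have hDu := (hu.fderiv_right (m := 1) (by norm_num)).differentiableAt one_ne_zero
  have hfirst : (fun w' => fderiv ℝ (u ∘ φ) w' e)
      =ᶠ[𝓝 w] fun w' => fderiv ℝ u (φ w') (deriv φ w' * e) := by
    filter_upwards [hφ.continuousAt.eventually
      (eventually_differentiableAt (hu.of_le (by norm_num))), hφ.eventually_analyticAt]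
      with w' hu' hφ' using fderiv_comp_analytic hu' hφ'.differentiableAt e
  have hφ₁ := hφ.differentiableAt.hasDerivAt.hasFDerivAt.restrictScalars ℝ
  have hφ₂ := (hφ.deriv.differentiableAt.hasDerivAt.mul_const e).hasFDerivAt.restrictScalars ℝ
  have hsecond := (hDu.hasFDerivAt.comp w hφ₁).clm_apply hφ₂
  have hleft := (huφ.differentiableAt one_ne_zero).hasFDerivAt.clm_apply (hasFDerivAt_const e w)
  have := congrArg (· e) (hleft.unique (hsecond.congr_of_eventuallyEq hfirst))
  simpa [mul_comm, mul_left_comm, add_comm] using this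

lemma lap_comp_analytic (hu : ContDiffAt ℝ 2 u (φ w))
    (hφ : AnalyticAt ℂ φ w) : lap (u ∘ φ) w = ‖deriv φ w‖ ^ 2 * lap u (φ w) := by
  have hcancel : fderiv ℝ u (φ w) (deriv (deriv φ) w * 1 * 1)
      + fderiv ℝ u (φ w) (deriv (deriv φ) w * Complex.I * Complex.I) = 0 := by
    simp [mul_assoc]
  rw [lap_eq_fderiv_fderiv (contDiffAt_comp_analytic hu hφ), lap_eq_fderiv_fderiv hu,
    fderiv_fderiv_comp_analytic hu hφ, fderiv_fderiv_comp_analytic hu hφ,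
    ← bilin_mul_add_bilin_mul_I]
  linear_combination (norm := (simp only [mul_one]; ring)) hcancel

end

/-! ### The Keller–Osserman bound -/

lemma deriv_deriv_nonpos_of_isLocalMax {f : ℝ → ℝ} {x : ℝ} (hmax : IsLocalMax f x)
    (hf : ContinuousAt f x) : deriv (deriv f) x ≤ 0 := by
  by_contra! hpos
  have hmin := isLocalMin_of_deriv_deriv_pos hpos hmax.deriv_eq_zero hf
  have hconst : f =ᶠ[𝓝 x] fun _ => f x := by
    filter_upwards [hmax, hmin] with y hle hge using le_antisymm hle hge
  simp [hconst.deriv.deriv_eq] at hpos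

lemma lap_nonpos_of_isLocalMax {f : ℂ → ℝ} {z : ℂ} (hmax : IsLocalMax f z)
    (hf : ContinuousAt f z) : lap f z ≤ 0 := by
  have hline (e : ℂ) : deriv (deriv fun t : ℝ => f (z + t * e)) 0 ≤ 0 := by
    have hcont : Tendsto (fun t : ℝ => z + t * e) (𝓝 0) (𝓝 z) := by
      have : Continuous fun t : ℝ => z + t * e := by fun_prop
      simpa using this.tendsto 0
    apply deriv_deriv_nonpos_of_isLocalMax
    · simpa [IsLocalMax, IsMaxFilter] using hcont.eventually hmax
    · simpa [ContinuousAt, Function.comp_def] using hf.tendsto.comp hcont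
  rw [lap_eq_deriv_deriv]
  simpa using add_nonpos (hline 1) (hline Complex.I)

lemma deriv_deriv_log_sub_sq {K b : ℝ} (hb : 0 < K - b ^ 2) :
    deriv (deriv fun t : ℝ => Real.log (K - (b + t) ^ 2)) 0
      = -2 * (K + b ^ 2) / (K - b ^ 2) ^ 2 := by
  have hlin (t : ℝ) : HasDerivAt (fun s : ℝ => b + s) 1 t := (hasDerivAt_id t).const_add b
  have hquad (t : ℝ) : HasDerivAt (fun s : ℝ => K - (b + s) ^ 2) (-(2 * (b + t))) t := by
    simpa using ((hlin t).pow 2).const_sub K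
  have hpos : ∀ᶠ t in 𝓝 (0 : ℝ), 0 < K - (b + t) ^ 2 :=
    (hquad 0).continuousAt.eventually_const_lt (by simpa using hb)
  have hfirst : deriv (fun t : ℝ => Real.log (K - (b + t) ^ 2))
      =ᶠ[𝓝 0] fun t => -(2 * (b + t)) / (K - (b + t) ^ 2) :=
    hpos.mono fun t ht => ((hquad t).log ht.ne').deriv
  have hsecond := ((hlin 0).const_mul 2).neg.div (hquad 0) (by simpa using hb.ne')
  rw [hfirst.deriv_eq]
  refine hsecond.deriv.trans ?_
  simp only [Pi.neg_apply, add_zero]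
  congr 1
  ring

lemma lap_log_sq_sub_norm_sq {a z : ℂ} {R : ℝ} (hz : z ∈ Metric.ball a R) :
    lap (fun w => Real.log (R ^ 2 - ‖w - a‖ ^ 2)) z
      = -(4 * R ^ 2) / (R ^ 2 - ‖z - a‖ ^ 2) ^ 2 := by
  have hsq (w : ℂ) : ‖w‖ ^ 2 = w.re ^ 2 + w.im ^ 2 := by
    rw [Complex.sq_norm, Complex.normSq_apply]; ring
  have hpos : 0 < R ^ 2 - ‖z - a‖ ^ 2 :=
    sub_pos.2 (pow_lt_pow_left₀ (mem_ball_iff_norm.1 hz) (norm_nonneg _) two_ne_zero)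
  rw [hsq] at hpos
  set x := (z - a).re with hx
  set y := (z - a).im with hy
  have hre (t : ℝ) : R ^ 2 - ‖z + t - a‖ ^ 2 = R ^ 2 - y ^ 2 - (x + t) ^ 2 := by
    rw [hsq, show z + t - a = z - a + t by ring, add_re, add_im, ofReal_re, ofReal_im, ← hx, ← hy]
    ring
  have him (t : ℝ) : R ^ 2 - ‖z + t * Complex.I - a‖ ^ 2 = R ^ 2 - x ^ 2 - (y + t) ^ 2 := by
    rw [hsq, show z + t * Complex.I - a = z - a + t * Complex.I by ring, add_re, add_im,
      re_ofReal_mul, im_ofReal_mul, I_re, I_im, ← hx, ← hy]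
    ring
  rw [lap_eq_deriv_deriv]
  simp only [hre, him]
  rw [deriv_deriv_log_sub_sq (by linarith), deriv_deriv_log_sub_sq (by linarith), hsq,
    show R ^ 2 - y ^ 2 - x ^ 2 = R ^ 2 - (x ^ 2 + y ^ 2) by ring,
    show R ^ 2 - x ^ 2 - y ^ 2 = R ^ 2 - (x ^ 2 + y ^ 2) by ring, ← add_div]
  congr 1
  ring

lemma lap_le_of_isLocalMax_add_log {u : ℂ → ℝ} {a z : ℂ} {R : ℝ} (hz : z ∈ Metric.ball a R)
    (hu : ContDiffAt ℝ 2 u z)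
    (hmax : IsLocalMax (fun w => u w + Real.log (R ^ 2 - ‖w - a‖ ^ 2)) z) :
    lap u z ≤ 4 * R ^ 2 / (R ^ 2 - ‖z - a‖ ^ 2) ^ 2 := by
  have hpos : 0 < R ^ 2 - ‖z - a‖ ^ 2 :=
    sub_pos.2 (pow_lt_pow_left₀ (mem_ball_iff_norm.1 hz) (norm_nonneg _) two_ne_zero)
  have hlog : ContDiffAt ℝ 2 (fun w : ℂ => Real.log (R ^ 2 - ‖w - a‖ ^ 2)) z := by
    refine ContDiffAt.log ?_ hpos.ne'
    exact contDiffAt_const.sub ((contDiffAt_id.sub contDiffAt_const).norm_sq ℝ)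
  have hle := lap_nonpos_of_isLocalMax hmax (hu.add hlog).continuousAt
  have hadd := lap_add hu hlog
  rw [lap_log_sq_sub_norm_sq hz, neg_div] at hadd
  linarith [hadd.symm.trans_le hle]

-- Keller–Osserman: at a maximum of `e ^ u * (R ^ 2 - |z - a| ^ 2)` the Laplacians of `u` and of
-- `-log (R ^ 2 - |z - a| ^ 2)` can be compared.
lemma mul_exp_le_of_mul_exp_le_lap {u : ℂ → ℝ} {a : ℂ} {R c : ℝ} (hR : 0 < R) (hc : 0 ≤ c)
    (hcont : ContinuousOn u (Metric.closedBall a R))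
    (hu : ∀ z ∈ Metric.ball a R, ContDiffAt ℝ 2 u z)
    (hlap : ∀ z ∈ Metric.ball a R, c * Real.exp (2 * u z) ≤ lap u z) :
    c * Real.exp (2 * u a) ≤ 4 / R ^ 2 := by
  set D : ℂ → ℝ := fun z => R ^ 2 - ‖z - a‖ ^ 2 with hD
  obtain ⟨z, -, hzmax⟩ := (isCompact_closedBall a R).exists_isMaxOn
    ⟨a, Metric.mem_closedBall_self hR.le⟩ (f := fun z => Real.exp (u z) * D z)
    (hcont.rexp.mul (by fun_prop))
  have hcenter : Real.exp (u a) * R ^ 2 ≤ Real.exp (u z) * D z := by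
    simpa [hD] using hzmax (Metric.mem_closedBall_self hR.le)
  have hDz : 0 < D z :=
    pos_of_mul_pos_right ((by positivity : 0 < Real.exp (u a) * R ^ 2).trans_le hcenter)
      (Real.exp_pos _).le
  have hDpos {w : ℂ} (hw : w ∈ Metric.ball a R) : 0 < D w :=
    sub_pos.2 (pow_lt_pow_left₀ (mem_ball_iff_norm.1 hw) (norm_nonneg _) two_ne_zero)
  have hzball : z ∈ Metric.ball a R :=
    mem_ball_iff_norm.2 (lt_of_pow_lt_pow_left₀ 2 hR.le (sub_pos.1 hDz))
  have hlocal : IsLocalMax (fun w => u w + Real.log (D w)) z := by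
    filter_upwards [Metric.isOpen_ball.mem_nhds hzball] with w hw
    have := Real.log_le_log (mul_pos (Real.exp_pos _) (hDpos hw))
      (hzmax (Metric.ball_subset_closedBall hw))
    simpa [Real.log_mul, (Real.exp_pos _).ne', (hDpos hw).ne', hDz.ne'] using this
  have hz2 : c * Real.exp (2 * u z) ≤ 4 * R ^ 2 / D z ^ 2 :=
    (hlap z hzball).trans (lap_le_of_isLocalMax_add_log hzball (hu z hzball) hlocal)
  have hexp (x : ℝ) : Real.exp (2 * x) = Real.exp x ^ 2 := by rw [← Real.exp_nat_mul]; norm_num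
  rw [le_div_iff₀ (by positivity), hexp] at hz2 ⊢
  refine le_of_mul_le_mul_right ?_ (by positivity : 0 < R ^ 2)
  calc c * Real.exp (u a) ^ 2 * R ^ 2 * R ^ 2 = c * (Real.exp (u a) * R ^ 2) ^ 2 := by ring
    _ ≤ c * (Real.exp (u z) * D z) ^ 2 := by gcongr
    _ = c * Real.exp (u z) ^ 2 * D z ^ 2 := by ring
    _ ≤ 4 * R ^ 2 := hz2

lemma eventually_comap_re_atTop {p : ℂ → Prop} :
    (∀ᶠ w in comap Complex.re atTop, p w) ↔ ∃ T : ℝ, ∀ w : ℂ, T < w.re → p w := by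
  rw [(atTop_basis_Ioi.comap Complex.re).eventually_iff]
  simp

lemma tendsto_atBot_of_mul_exp_le_lap {U : ℂ → ℝ} {c : ℝ} (hc : 0 < c)
    (hU : ∀ᶠ w in comap Complex.re atTop, ContDiffAt ℝ 2 U w)
    (hlap : ∀ᶠ w in comap Complex.re atTop, c * Real.exp (2 * U w) ≤ lap U w) :
    Tendsto U (comap Complex.re atTop) atBot := by
  obtain ⟨T, hT⟩ := eventually_comap_re_atTop.1 (hU.and hlap)
  have hdisc : ∀ R > 0, ∀ w : ℂ, T + R < w.re → c * Real.exp (2 * U w) ≤ 4 / R ^ 2 := by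
    intro R hR w hw
    have hre : ∀ z ∈ Metric.closedBall w R, T < z.re := fun z hz => by
      have := (abs_re_le_norm (z - w)).trans (mem_closedBall_iff_norm.1 hz)
      rw [sub_re] at this
      linarith [neg_le_of_abs_le this]
    have hsub := Metric.ball_subset_closedBall (x := w) (ε := R)
    exact mul_exp_le_of_mul_exp_le_lap hR hc.le
      (fun z hz => (hT z (hre z hz)).1.continuousAt.continuousWithinAt)
      (fun z hz => (hT z (hre z (hsub hz))).1) (fun z hz => (hT z (hre z (hsub hz))).2)
  refine tendsto_atBot.2 fun b => ?_
  have hsmall : Tendsto (fun R : ℝ => 4 / R ^ 2) atTop (𝓝 0) :=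
    tendsto_const_nhds.div_atTop (tendsto_pow_atTop two_ne_zero)
  obtain ⟨R, hR, hRpos⟩ := ((hsmall.eventually_lt_const
    (by positivity : 0 < c * Real.exp (2 * b))).and (eventually_gt_atTop 0)).exists
  refine eventually_comap_re_atTop.2 ⟨T + R, fun w hw => ?_⟩
  have := lt_of_mul_lt_mul_left ((hdisc R hRpos w hw).trans_lt hR) hc.le
  linarith [Real.exp_lt_exp.1 this]

/-! ### Vertical means and Fourier coefficients -/

section

variable {f g : ℂ → ℝ} {T t : ℝ}

/-- The mean of `f` over the segment `t + i[0, 2π]`; for the `2πi`-periodic functions considered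
here this is the circular mean in the logarithmic coordinate `w = -log z`. -/
noncomputable def verticalMean (f : ℂ → ℝ) (t : ℝ) : ℝ :=
  (2 * π)⁻¹ * ∫ θ in 0..2 * π, f (t + θ * Complex.I)

/-- The real Fourier coefficient of frequency `n` and phase `φ` of `f` on the segment
`t + i[0, 2π]`. Varying the phase covers cosine and sine coefficients of both signs at once. -/
noncomputable def cosMoment (f : ℂ → ℝ) (n : ℤ) (φ t : ℝ) : ℝ :=
  verticalMean (fun w => f w * Real.cos (n * w.im + φ)) t

lemma cosMoment_zero_zero (f : ℂ → ℝ) : cosMoment f 0 0 = verticalMean f := by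
  funext t
  simp [cosMoment]

lemma continuous_vertical (hf : ∀ w : ℂ, w.re = t → ContinuousAt f w) :
    Continuous fun θ : ℝ => f (t + θ * Complex.I) :=
  continuous_iff_continuousAt.2 fun θ =>
    (hf _ (by simp)).comp (f := fun θ : ℝ => (t : ℂ) + θ * Complex.I) (by fun_prop)

lemma verticalMean_add (hf : ∀ w : ℂ, w.re = t → ContinuousAt f w)
    (hg : ∀ w : ℂ, w.re = t → ContinuousAt g w) :
    verticalMean (fun w => f w + g w) t = verticalMean f t + verticalMean g t := by
  rw [verticalMean, intervalIntegral.integral_add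
    ((continuous_vertical hf).intervalIntegrable _ _)
    ((continuous_vertical hg).intervalIntegrable _ _), mul_add, verticalMean, verticalMean]

lemma verticalMean_const (c t : ℝ) : verticalMean (fun _ => c) t = c := by
  rw [verticalMean, intervalIntegral.integral_const, sub_zero, smul_eq_mul,
    inv_mul_cancel_left₀ Real.two_pi_pos.ne']

lemma verticalMean_nonneg (hf : ∀ w : ℂ, w.re = t → 0 ≤ f w) : 0 ≤ verticalMean f t :=
  mul_nonneg (by positivity)
    (intervalIntegral.integral_nonneg Real.two_pi_pos.le fun θ _ => hf _ (by simp))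

lemma verticalMean_abs_of_nonpos (hf : ∀ w : ℂ, w.re = t → f w ≤ 0) :
    verticalMean (fun w => |f w|) t = -verticalMean f t := by
  have habs (θ : ℝ) : |f (t + θ * Complex.I)| = -f (t + θ * Complex.I) :=
    abs_of_nonpos (hf _ (by simp))
  simp only [verticalMean, habs, intervalIntegral.integral_neg, mul_neg]

lemma abs_verticalMean_le {c : ℝ} (hf : ∀ w : ℂ, w.re = t → |f w| ≤ c) :
    |verticalMean f t| ≤ c := by
  have hint : ‖∫ θ in 0..2 * π, f (t + θ * Complex.I)‖ ≤ c * |2 * π - 0| :=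
    intervalIntegral.norm_integral_le_of_norm_le_const fun θ _ => hf _ (by simp)
  rw [verticalMean, abs_mul, abs_inv, inv_mul_le_iff₀ (by positivity), mul_comm _ c]
  rwa [sub_zero, Real.norm_eq_abs] at hint

lemma tendsto_verticalMean {c : ℝ} (hcont : ∀ᶠ w in comap Complex.re atTop, ContinuousAt f w)
    (hf : Tendsto f (comap Complex.re atTop) (𝓝 c)) : Tendsto (verticalMean f) atTop (𝓝 c) := by
  rw [Metric.tendsto_nhds]
  intro ε hε
  obtain ⟨T, hT⟩ := eventually_comap_re_atTop.1
    (hcont.and (Metric.tendsto_nhds.1 hf (ε / 2) (by positivity)))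
  filter_upwards [eventually_gt_atTop T] with t ht
  have hsub : verticalMean f t = verticalMean (fun w => f w - c) t + c := by
    have := verticalMean_add (f := fun w => f w - c) (g := fun _ => c)
      (fun w hw => (hT w (hw ▸ ht)).1.sub continuousAt_const) (fun _ _ => continuousAt_const)
    simpa only [sub_add_cancel, verticalMean_const] using this
  have hle : |verticalMean (fun w => f w - c) t| ≤ ε / 2 :=
    abs_verticalMean_le fun w hw => (hT w (hw ▸ ht)).2.le
  rw [hsub, Real.dist_eq, add_sub_cancel_right]
  linarith

lemma hasDerivAt_verticalMean (hf : ∀ w : ℂ, T < w.re → ContDiffAt ℝ 1 f w) (ht : T < t) :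
    HasDerivAt (verticalMean f) (verticalMean (pdx f) t) t := by
  obtain ⟨δ, hδ, hδT⟩ : ∃ δ > 0, T < t - δ := ⟨(t - T) / 2, by linarith, by linarith⟩
  have hcont : ContinuousOn (fun p : ℝ × ℝ => pdx f (p.1 + p.2 * Complex.I))
      (Icc (t - δ) (t + δ) ×ˢ Icc 0 (2 * π)) := fun p hp =>
    ((continuousAt_pdx (hf (p.1 + p.2 * Complex.I) (by simpa using hδT.trans_le hp.1.1))).comp
      (f := fun p : ℝ × ℝ => (p.1 : ℂ) + p.2 * Complex.I) (by fun_prop)).continuousWithinAt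
  obtain ⟨C, hC⟩ := (isCompact_Icc.prod isCompact_Icc).exists_bound_of_continuousOn hcont
  have hslice {s : ℝ} (hs : T < s) : Continuous fun θ : ℝ => f (s + θ * Complex.I) :=
    continuous_vertical fun w hw => (hf w (hw ▸ hs)).continuousAt
  refine (intervalIntegral.hasDerivAt_integral_of_dominated_loc_of_deriv_le
    (μ := MeasureTheory.volume)
    (F := fun (s : ℝ) θ => f (s + θ * Complex.I))
    (F' := fun (s : ℝ) θ => pdx f (s + θ * Complex.I)) (bound := fun _ => C)
    (Icc_mem_nhds (sub_lt_self t hδ) (lt_add_of_pos_right t hδ)) ?_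
    ((hslice ht).intervalIntegrable _ _) ?_ ?_ intervalIntegrable_const ?_).2.const_mul _
  · filter_upwards [lt_mem_nhds ht] with s hs using (hslice hs).aestronglyMeasurable
  · exact (continuous_vertical fun w hw =>
      continuousAt_pdx (hf w (hw ▸ ht))).aestronglyMeasurable
  · refine Eventually.of_forall fun θ hθ s hs => hC (s, θ) ⟨hs, ?_⟩
    rw [uIoc_of_le Real.two_pi_pos.le] at hθ
    exact ⟨hθ.1.le, hθ.2⟩
  · refine Eventually.of_forall fun θ _ s hs => hasDerivAt_pdx ?_
    exact (hf _ (by simpa using hδT.trans_le hs.1)).differentiableAt one_ne_zero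

lemma pdx_mul_comp_im (f : ℂ → ℝ) (c : ℝ → ℝ) :
    pdx (fun w => f w * c w.im) = fun w => pdx f w * c w.im := by
  funext w
  simp [pdx]

lemma continuousAt_mul_cos {w : ℂ} (hf : ContinuousAt f w) (n : ℤ) (φ : ℝ) :
    ContinuousAt (fun w => f w * Real.cos (n * w.im + φ)) w :=
  hf.mul (by fun_prop)

lemma hasDerivAt_cosMoment (hf : ∀ w : ℂ, T < w.re → ContDiffAt ℝ 1 f w)
    (n : ℤ) (φ : ℝ) (ht : T < t) : HasDerivAt (cosMoment f n φ) (cosMoment (pdx f) n φ t) t := by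
  have hcos : ContDiff ℝ 1 fun w : ℂ => Real.cos (n * w.im + φ) :=
    Real.contDiff_cos.comp ((contDiff_const.mul imCLM.contDiff).add contDiff_const)
  have := hasDerivAt_verticalMean (fun w hw => (hf w hw).mul hcos.contDiffAt) ht
  rwa [pdx_mul_comp_im f fun θ => Real.cos (n * θ + φ)] at this

lemma pdy_periodic {c : ℂ} (hper : Function.Periodic f c) :
    Function.Periodic (pdy f) c := fun w => by
  simp only [pdy, add_right_comm w c, hper _]

lemma cosMoment_pdy (hper : Function.Periodic f (2 * π * Complex.I))
    (hf : ∀ w : ℂ, w.re = t → ContDiffAt ℝ 1 f w) (n : ℤ) (φ : ℝ) :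
    cosMoment (pdy f) n φ t = n * cosMoment f n (φ - π / 2) t := by
  have hcos (θ : ℝ) : HasDerivAt (fun θ : ℝ => Real.cos (n * θ + φ))
      (-(n * Real.cos (n * θ + (φ - π / 2)))) θ := by
    have := (((hasDerivAt_id θ).const_mul (n : ℝ)).add_const φ).cos
    rw [← add_sub_assoc, Real.cos_sub_pi_div_two]
    simpa [mul_comm] using this
  have hparts := intervalIntegral.integral_mul_deriv_eq_deriv_mul (a := 0) (b := 2 * π)
    (v := fun θ : ℝ => f (t + θ * Complex.I)) (v' := fun θ => pdy f (t + θ * Complex.I))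
    (fun θ _ => hcos θ)
    (fun θ _ => hasDerivAt_pdy ((hf _ (by simp)).differentiableAt one_ne_zero))
    (Continuous.intervalIntegrable (by fun_prop) _ _)
    ((continuous_vertical fun w hw => continuousAt_pdy (hf w hw)).intervalIntegrable _ _)
  have hend : f (t + (2 * π : ℝ) * Complex.I) = f (t + (0 : ℝ) * Complex.I) := by
    simp [hper _]
  have hcosend : Real.cos (n * (2 * π) + φ) = Real.cos (n * 0 + φ) := by
    simp [add_comm _ φ]
  have hfactor (θ : ℝ) : -(n * Real.cos (n * θ + (φ - π / 2))) * f (t + θ * Complex.I)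
      = -n * (f (t + θ * Complex.I) * Real.cos (n * θ + (φ - π / 2))) := by ring
  simp only [hend, hcosend, sub_self, zero_sub, hfactor, intervalIntegral.integral_const_mul]
    at hparts
  simp only [cosMoment, verticalMean, add_im, ofReal_im, mul_im, ofReal_re, I_im, I_re, mul_one,
    mul_zero, add_zero, zero_add]
  simp only [mul_comm (pdy f _), hparts]
  ring

lemma hasDerivAt_cosMoment_pdx (hper : Function.Periodic f (2 * π * Complex.I))
    (hf : ∀ w : ℂ, T < w.re → ContDiffAt ℝ 2 f w) (n : ℤ) (φ : ℝ) (ht : T < t) :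
    HasDerivAt (cosMoment (pdx f) n φ) (n ^ 2 * cosMoment f n φ t + cosMoment (lap f) n φ t) t := by
  have hline : ∀ w : ℂ, w.re = t → ContDiffAt ℝ 2 f w := fun w hw => hf w (hw ▸ ht)
  have hlap : cosMoment (lap f) n φ t
      = cosMoment (pdx (pdx f)) n φ t + cosMoment (pdy (pdy f)) n φ t := by
    have := verticalMean_add
      (fun w hw => continuousAt_mul_cos
        (continuousAt_pdx (contDiffAt_pdx (hline w hw) one_add_one_eq_two.le)) n φ)
      (fun w hw => continuousAt_mul_cos
        (continuousAt_pdy (contDiffAt_pdy (hline w hw) one_add_one_eq_two.le)) n φ)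
    simp only [← add_mul] at this
    exact this
  have hyy : cosMoment (pdy (pdy f)) n φ t = -(n ^ 2 * cosMoment f n φ t) := by
    rw [cosMoment_pdy (pdy_periodic hper)
      (fun w hw => contDiffAt_pdy (hline w hw) one_add_one_eq_two.le),
      cosMoment_pdy hper (fun w hw => (hline w hw).of_le one_le_two), ← mul_assoc, ← sq,
      sub_sub, add_halves]
    simp only [cosMoment, ← add_sub_assoc, Real.cos_sub_pi, mul_neg, verticalMean,
      intervalIntegral.integral_neg]
  refine (hasDerivAt_cosMoment
    (fun w hw => contDiffAt_pdx (hf w hw) one_add_one_eq_two.le) n φ ht).congr_deriv ?_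
  linarith

lemma abs_cosMoment_le {c : ℝ} (hf : ∀ w : ℂ, w.re = t → |f w| ≤ c) (n : ℤ)
    (φ : ℝ) : |cosMoment f n φ t| ≤ c :=
  abs_verticalMean_le fun w hw => by
    rw [abs_mul]
    exact (mul_le_of_le_one_right (abs_nonneg _) (Real.abs_cos_le_one _)).trans (hf w hw)

lemma abs_cosMoment_le_verticalMean_abs
    (hf : ∀ w : ℂ, w.re = t → ContinuousAt f w) (n : ℤ) (φ : ℝ) :
    |cosMoment f n φ t| ≤ verticalMean (fun w => |f w|) t := by
  have hcos := continuous_vertical fun w hw => continuousAt_mul_cos (hf w hw) n φ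
  rw [cosMoment, verticalMean, abs_mul, abs_of_pos (inv_pos.2 Real.two_pi_pos)]
  refine mul_le_mul_of_nonneg_left ?_ (inv_pos.2 Real.two_pi_pos).le
  refine (intervalIntegral.abs_integral_le_integral_abs Real.two_pi_pos.le).trans ?_
  refine intervalIntegral.integral_mono_on Real.two_pi_pos.le (hcos.abs.intervalIntegrable _ _)
    ((continuous_vertical fun w hw => (hf w hw).abs).intervalIntegrable _ _) fun θ _ => ?_
  rw [abs_mul]
  exact mul_le_of_le_one_right (abs_nonneg _) (Real.abs_cos_le_one _)

lemma norm_sub_fourierCoeff_zero_le {T : ℝ} [Fact (0 < T)] {F : C(AddCircle T, ℂ)} {b : ℤ → ℝ}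
    (hb : Summable b) (hb0 : 0 ≤ b 0) (hF : ∀ n ≠ 0, ‖fourierCoeff F n‖ ≤ b n) (x : AddCircle T) :
    ‖F x - fourierCoeff F 0‖ ≤ ∑' n, b n := by
  have hcoeff : Summable (fourierCoeff F) := by
    refine Summable.of_norm_bounded_eventually hb ?_
    filter_upwards [eventually_cofinite_ne 0] with n hn using hF n hn
  have hsum := (has_pointwise_sum_fourier_series_of_summable hcoeff x).sub
    (hasSum_ite_eq 0 (fourierCoeff F 0))
  rw [← hsum.tsum_eq]
  refine tsum_of_norm_bounded hb.hasSum fun n => ?_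
  rcases eq_or_ne n 0 with rfl | hn
  · simpa using hb0
  · have hunit : ‖fourier n x‖ = 1 := Circle.norm_coe _
    simpa only [if_neg hn, sub_zero, norm_smul, hunit, mul_one] using hF n hn

lemma re_fourierCoeff_mul_exp [Fact (0 < 2 * π)] {F : C(AddCircle (2 * π), ℂ)}
    (hF : ∀ θ : ℝ, F θ = f (t + θ * Complex.I)) (n : ℤ) (φ : ℝ) :
    (fourierCoeff F n * Complex.exp (-φ * Complex.I)).re = cosMoment f n φ t := by
  have hintegrand (θ : ℝ) :
      (fourier (-n) (θ : AddCircle (2 * π)) • F θ * Complex.exp (-φ * Complex.I)).re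
        = f (t + θ * Complex.I) * Real.cos (n * θ + φ) := by
    have hexponent : 2 * π * Complex.I * (-n : ℤ) * θ / (2 * π : ℝ) + -φ * Complex.I
        = (-(n * θ + φ) : ℝ) * Complex.I := by
      have : (π : ℂ) ≠ 0 := ofReal_ne_zero.2 Real.pi_ne_zero
      push_cast
      field_simp
      ring
    rw [hF, fourier_coe_apply, smul_eq_mul, mul_right_comm, ← Complex.exp_add, hexponent,
      re_mul_ofReal, exp_ofReal_mul_I_re, Real.cos_neg, mul_comm]
  have hF_cont : Continuous fun θ : ℝ =>
      fourier (-n) (θ : AddCircle (2 * π)) • F θ * Complex.exp (-φ * Complex.I) := by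
    fun_prop
  rw [fourierCoeff_eq_intervalIntegral _ n 0, zero_add, one_div, smul_mul_assoc, smul_re,
    ← intervalIntegral.integral_mul_const, smul_eq_mul, ← reCLM_apply,
    ← reCLM.intervalIntegral_comp_comm (hF_cont.intervalIntegrable _ _)]
  simp only [reCLM_apply, hintegrand]
  simp [cosMoment, verticalMean]

lemma abs_sub_verticalMean_le {b : ℤ → ℝ}
    (hf : ∀ w : ℂ, w.re = t → ContinuousAt f w) (hper : Function.Periodic f (2 * π * Complex.I))
    (hb : Summable b) (hb0 : 0 ≤ b 0) (hmoment : ∀ n ≠ 0, ∀ φ, cosMoment f n φ t ≤ b n) {w : ℂ}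
    (hw : w.re = t) : |f w - verticalMean f t| ≤ ∑' n, b n := by
  have : Fact (0 < 2 * π) := ⟨Real.two_pi_pos⟩
  have hslice : Function.Periodic (fun θ : ℝ => (f (t + θ * Complex.I) : ℂ)) (2 * π) := fun θ => by
    simpa [add_mul, add_assoc] using hper (t + θ * Complex.I)
  let F : C(AddCircle (2 * π), ℂ) :=
    ⟨hslice.lift, continuous_coinduced_dom.2 (continuous_ofReal.comp (continuous_vertical hf))⟩
  have hF (θ : ℝ) : F θ = f (t + θ * Complex.I) := hslice.lift_coe θ
  have hcoeff : ∀ n ≠ 0, ‖fourierCoeff F n‖ ≤ b n := fun n hn => by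
    set c := fourierCoeff F n
    have hrotate : c * Complex.exp (-c.arg * Complex.I) = ‖c‖ := by
      nth_rw 1 [← norm_mul_exp_arg_mul_I c]
      rw [mul_assoc, ← Complex.exp_add, neg_mul, add_neg_cancel, Complex.exp_zero, mul_one]
    rw [← ofReal_re ‖c‖, ← hrotate, re_fourierCoeff_mul_exp hF]
    exact hmoment n hn _
  have hmean : (fourierCoeff F 0).re = verticalMean f t := by
    simpa [cosMoment_zero_zero] using re_fourierCoeff_mul_exp hF 0 0
  have hwF : F w.im = f w := by rw [hF, ← hw, re_add_im]
  calc |f w - verticalMean f t| = |(F w.im - fourierCoeff F 0).re| := by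
        rw [sub_re, hwF, ofReal_re, hmean]
    _ ≤ ‖F w.im - fourierCoeff F 0‖ := abs_re_le_norm _
    _ ≤ ∑' n, b n := norm_sub_fourierCoeff_zero_le hb hb0 hcoeff _

end

/-! ### Second order ordinary differential inequalities -/

lemma nonpos_of_deriv_deriv_pos {w w' w'' : ℝ → ℝ} {a b : ℝ} (hcont : ContinuousOn w (Icc a b))
    (hw : ∀ t ∈ Ioo a b, HasDerivAt w (w' t) t) (hw' : ∀ t ∈ Ioo a b, HasDerivAt w' (w'' t) t)
    (hpos : ∀ t ∈ Ioo a b, 0 < w t → 0 < w'' t) (ha : w a ≤ 0) (hb : w b ≤ 0)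
    {t : ℝ} (ht : t ∈ Icc a b) : w t ≤ 0 := by
  obtain ⟨p, hp, hmax⟩ := isCompact_Icc.exists_isMaxOn ⟨t, ht⟩ hcont
  by_contra! hwt
  have hwp : 0 < w p := hwt.trans_le (hmax ht)
  have hpab : p ∈ Ioo a b := by
    refine ⟨hp.1.lt_of_ne ?_, hp.2.lt_of_ne ?_⟩ <;> rintro rfl <;> linarith
  have hderiv : deriv w =ᶠ[𝓝 p] w' := by
    filter_upwards [isOpen_Ioo.mem_nhds hpab] with s hs using (hw s hs).deriv
  have hle := deriv_deriv_nonpos_of_isLocalMax (hmax.isLocalMax (Icc_mem_nhds hpab.1 hpab.2))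
    (hw p hpab).continuousAt
  rw [hderiv.deriv_eq, (hw' p hpab).deriv] at hle
  exact (hpos p hpab hwp).not_ge hle

lemma le_div_sq_add_exp_of_le_deriv_deriv {g g' g'' : ℝ → ℝ} {k S A t₁ : ℝ} (hk : 0 < k)
    (hS : 0 ≤ S) (hA : 0 ≤ A) (hg : ∀ t ≥ t₁, HasDerivAt g (g' t) t)
    (hg' : ∀ t ≥ t₁, HasDerivAt g' (g'' t) t) (hode : ∀ t ≥ t₁, k ^ 2 * g t - S ≤ g'' t)
    (hstart : g t₁ ≤ A) (hgrowth : g =o[atTop] fun t => Real.exp (k * t))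
    {t : ℝ} (ht : t₁ ≤ t) : g t ≤ S / k ^ 2 + A * Real.exp (-k * (t - t₁)) := by
  have hexp (m c s : ℝ) : HasDerivAt (fun s => Real.exp (m * (s - c)))
      (m * Real.exp (m * (s - c))) s := by
    simpa [mul_comm] using (((hasDerivAt_id s).sub_const c).const_mul m).exp
  have hbarrier : ∀ ε > 0, g t ≤ S / k ^ 2 + A * Real.exp (-k * (t - t₁))
      + ε * Real.exp (k * (t - 0)) := by
    intro ε hε
    set B : ℝ → ℝ := fun s => S / k ^ 2 + A * Real.exp (-k * (s - t₁)) + ε * Real.exp (k * (s - 0))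
    have hB (s : ℝ) : HasDerivAt B (A * (-k * Real.exp (-k * (s - t₁)))
        + ε * (k * Real.exp (k * (s - 0)))) s :=
      (((hexp (-k) t₁ s).const_mul A).const_add _).add ((hexp k 0 s).const_mul ε)
    have hB' (s : ℝ) := (((hexp (-k) t₁ s).const_mul (-k)).const_mul A).add
      (((hexp k 0 s).const_mul k).const_mul ε)
    obtain ⟨b, hgb, htb⟩ := ((hgrowth.def hε).and (eventually_ge_atTop t)).exists
    refine sub_nonpos.1 (nonpos_of_deriv_deriv_pos (w := fun s => g s - B s) (a := t₁) (b := b)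
      (fun s hs => ((hg s hs.1).sub (hB s)).continuousAt.continuousWithinAt)
      (fun s hs => (hg s hs.1.le).sub (hB s)) (fun s hs => (hg' s hs.1.le).sub (hB' s))
      (fun s hs hpos => ?_) ?_ ?_ ⟨ht, htb⟩)
    · have hSk : k ^ 2 * (S / k ^ 2) = S := by field_simp
      have := mul_pos (pow_pos hk 2) hpos
      simp only [B] at this
      linarith [hode s hs.1.le]
    · have : 0 ≤ S / k ^ 2 + ε * Real.exp (k * (t₁ - 0)) := by positivity
      simp only [B, sub_self, mul_zero, Real.exp_zero]
      linarith
    · rw [Real.norm_eq_abs, Real.norm_eq_abs, Real.abs_exp] at hgb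
      have : 0 ≤ S / k ^ 2 + A * Real.exp (-k * (b - t₁)) := by positivity
      simp only [B, sub_zero]
      linarith [le_of_abs_le hgb]
  refine le_of_forall_pos_le_add fun δ hδ => ?_
  simpa using hbarrier (δ / Real.exp (k * (t - 0))) (by positivity)

lemma add_mul_sub_le_of_deriv_deriv_nonneg {M N R : ℝ → ℝ} {t₁ t : ℝ}
    (hM : ∀ s ≥ t₁, HasDerivAt M (N s) s) (hN : ∀ s ≥ t₁, HasDerivAt N (R s) s)
    (hR : ∀ s ≥ t₁, 0 ≤ R s) (ht : t₁ ≤ t) : M t₁ + N t₁ * (t - t₁) ≤ M t := by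
  have hmono : MonotoneOn N (Ici t₁) := monotoneOn_of_hasDerivWithinAt_nonneg (convex_Ici t₁)
    (fun s hs => (hN s hs).continuousAt.continuousWithinAt)
    (fun s hs => (hN s (interior_subset hs)).hasDerivWithinAt)
    (fun s hs => hR s (interior_subset hs))
  have hderiv (s : ℝ) (hs : s ∈ interior (Ici t₁)) : N t₁ ≤ deriv M s := by
    rw [(hM s (interior_subset hs)).deriv]
    exact hmono self_mem_Ici (interior_subset hs) (interior_subset hs)
  have := (convex_Ici t₁).mul_sub_le_image_sub_of_le_deriv
    (fun s hs => (hM s hs).continuousAt.continuousWithinAt)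
    (fun s hs => (hM s (interior_subset hs)).differentiableAt.differentiableWithinAt)
    hderiv t₁ self_mem_Ici t ht ht
  linarith

/-! ### Decay of the oscillation -/

section

variable {U : ℂ → ℝ}

lemma hasDerivAt_verticalMean_pdx {T t : ℝ} (hper : Function.Periodic U (2 * π * Complex.I))
    (hU : ∀ w : ℂ, T < w.re → ContDiffAt ℝ 2 U w) (ht : T < t) :
    HasDerivAt (verticalMean (pdx U)) (verticalMean (lap U) t) t := by
  simpa [cosMoment_zero_zero] using hasDerivAt_cosMoment_pdx hper hU 0 0 ht

lemma verticalMean_abs_isLittleO_exp (hper : Function.Periodic U (2 * π * Complex.I))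
    (hU : ∀ᶠ w in comap Complex.re atTop, ContDiffAt ℝ 2 U w)
    (hneg : ∀ᶠ w in comap Complex.re atTop, U w ≤ 0)
    (hlap : ∀ᶠ w in comap Complex.re atTop, 0 ≤ lap U w) :
    verticalMean (fun w => |U w|) =o[atTop] Real.exp := by
  obtain ⟨T, hT⟩ := eventually_comap_re_atTop.1 (hU.and (hneg.and hlap))
  set t₁ := T + 1
  have hline {t : ℝ} (ht : t₁ ≤ t) {w : ℂ} (hw : w.re = t) : T < w.re := by
    rw [hw]; exact (lt_add_one T).trans_le ht
  have hlower : ∀ t ≥ t₁,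
      verticalMean U t₁ + verticalMean (pdx U) t₁ * (t - t₁) ≤ verticalMean U t := fun t ht => by
    refine add_mul_sub_le_of_deriv_deriv_nonneg (R := verticalMean (lap U)) (fun s hs => ?_)
      (fun s hs => hasDerivAt_verticalMean_pdx hper (fun w hw => (hT w hw).1)
        ((lt_add_one T).trans_le hs)) (fun s hs => ?_) ht
    · exact hasDerivAt_verticalMean (fun w hw => (hT w hw).1.of_le one_le_two)
        ((lt_add_one T).trans_le hs)
    · exact verticalMean_nonneg fun w hw => (hT w (hline hs hw)).2.2
  have hlinear : (fun t => -verticalMean U t₁ - verticalMean (pdx U) t₁ * (t - t₁))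
      =o[atTop] Real.exp := by
    have hconst (c : ℝ) : (fun _ : ℝ => c) =o[atTop] Real.exp :=
      Asymptotics.isLittleO_const_left.2
        (.inr (tendsto_abs_atTop_atTop.comp Real.tendsto_exp_atTop))
    exact (hconst _).sub
      (((by simpa using isLittleO_pow_exp_atTop (n := 1) :
        (fun t : ℝ => t) =o[atTop] Real.exp).sub (hconst t₁)).const_mul_left _)
  refine (Asymptotics.IsBigO.of_bound' ?_).trans_isLittleO hlinear
  filter_upwards [eventually_ge_atTop t₁] with t ht
  rw [Real.norm_of_nonneg (verticalMean_nonneg fun _ _ => abs_nonneg _),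
    verticalMean_abs_of_nonpos fun w hw => (hT w (hline ht hw)).2.1]
  exact (by linarith [hlower t ht] : _ ≤ _).trans (Real.le_norm_self _)

lemma cosMoment_le_of_abs_lap_le {T ε t₁ t : ℝ} {n : ℤ} (hn : n ≠ 0) (hε : 0 ≤ ε)
    (hU : ∀ w : ℂ, T < w.re → ContDiffAt ℝ 2 U w) (hper : Function.Periodic U (2 * π * Complex.I))
    (hlap : ∀ w : ℂ, T < w.re → |lap U w| ≤ ε)
    (hgrowth : verticalMean (fun w => |U w|) =o[atTop] Real.exp) (hT : T < t₁) (ht : t₁ ≤ t)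
    (φ : ℝ) :
    cosMoment U n φ t
      ≤ ε / n ^ 2 + verticalMean (fun w => |U w|) t₁ * Real.exp (-|(n : ℝ)| * (t - t₁)) := by
  have hn1 : 1 ≤ |(n : ℝ)| := mod_cast Int.one_le_abs hn
  have hmean {s : ℝ} (hs : T < s) : |cosMoment U n φ s| ≤ verticalMean (fun w => |U w|) s :=
    abs_cosMoment_le_verticalMean_abs (fun w hw => (hU w (hw ▸ hs)).continuousAt) n φ
  have hlittle : cosMoment U n φ =o[atTop] fun s => Real.exp (|(n : ℝ)| * s) := by
    refine (Asymptotics.IsBigO.of_bound' ?_).trans_isLittleO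
      (hgrowth.trans_isBigO (Asymptotics.IsBigO.of_bound' ?_))
    · filter_upwards [eventually_gt_atTop T] with s hs
        using (hmean hs).trans (le_abs_self _)
    · filter_upwards [eventually_ge_atTop 0] with s hs
      simpa only [Real.norm_eq_abs, Real.abs_exp, Real.exp_le_exp] using
        le_mul_of_one_le_left hs hn1
  rw [← sq_abs (n : ℝ)]
  refine le_div_sq_add_exp_of_le_deriv_deriv (zero_lt_one.trans_le hn1) hε
    ((abs_nonneg _).trans (hmean hT))
    (fun s hs => hasDerivAt_cosMoment (fun w hw => (hU w hw).of_le one_le_two) n φ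
      (hT.trans_le hs))
    (fun s hs => hasDerivAt_cosMoment_pdx hper hU n φ (hT.trans_le hs)) (fun s hs => ?_)
    ((le_abs_self _).trans (hmean hT)) hlittle ht
  have := abs_cosMoment_le (fun w hw => hlap w (hw ▸ hT.trans_le hs)) n φ
  rw [sq_abs]
  linarith [neg_le_of_abs_le this]

lemma exp_neg_le_two_div_sq {x : ℝ} (hx : 0 < x) : Real.exp (-x) ≤ 2 / x ^ 2 := by
  rw [Real.exp_neg, ← one_div, div_le_div_iff₀ (Real.exp_pos x) (by positivity)]
  linarith [Real.quadratic_le_exp_of_nonneg hx.le]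

lemma eventually_cosMoment_le (hU : ∀ᶠ w in comap Complex.re atTop, ContDiffAt ℝ 2 U w)
    (hper : Function.Periodic U (2 * π * Complex.I))
    (hlap : Tendsto (lap U) (comap Complex.re atTop) (𝓝 0))
    (hgrowth : verticalMean (fun w => |U w|) =o[atTop] Real.exp) {δ : ℝ} (hδ : 0 < δ) :
    ∀ᶠ t in atTop, ∀ n : ℤ, n ≠ 0 → ∀ φ, cosMoment U n φ t ≤ 2 * δ / n ^ 2 := by
  obtain ⟨T, hT⟩ := eventually_comap_re_atTop.1
    (hU.and (Metric.tendsto_nhds.1 hlap δ hδ))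
  have hlapT : ∀ w : ℂ, T < w.re → |lap U w| ≤ δ := fun w hw => by
    simpa using (hT w hw).2.le
  set A := verticalMean (fun w => |U w|) (T + 1)
  have hsmall : Tendsto (fun t => A * 2 / (t - (T + 1)) ^ 2) atTop (𝓝 0) :=
    tendsto_const_nhds.div_atTop
      ((tendsto_pow_atTop two_ne_zero).comp (tendsto_atTop_add_const_right _ _ tendsto_id))
  filter_upwards [hsmall.eventually_le_const hδ, eventually_gt_atTop (T + 1)] with t htδ ht n hn φ
  have hs : 0 < t - (T + 1) := sub_pos.2 ht
  have hn0 : 0 < |(n : ℝ)| := abs_pos.2 (mod_cast hn)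
  have hA : 0 ≤ A := (abs_nonneg _).trans
    (abs_cosMoment_le_verticalMean_abs (n := n) (φ := φ) fun w hw =>
      (hT w (hw ▸ lt_add_one T)).1.continuousAt)
  calc cosMoment U n φ t ≤ δ / n ^ 2 + A * Real.exp (-|(n : ℝ)| * (t - (T + 1))) :=
        cosMoment_le_of_abs_lap_le hn hδ.le (fun w hw => (hT w hw).1) hper hlapT hgrowth
          (lt_add_one T) ht.le φ
    _ ≤ δ / n ^ 2 + A * (2 / (|(n : ℝ)| * (t - (T + 1))) ^ 2) := by
        rw [neg_mul]
        gcongr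
        exact exp_neg_le_two_div_sq (mul_pos hn0 hs)
    _ = δ / n ^ 2 + A * 2 / (t - (T + 1)) ^ 2 / n ^ 2 := by
        rw [mul_pow, sq_abs, div_div, mul_comm ((n : ℝ) ^ 2), mul_div_assoc]
    _ ≤ δ / n ^ 2 + δ / n ^ 2 := by gcongr
    _ = 2 * δ / n ^ 2 := by ring

lemma tendsto_sub_verticalMean (hU : ∀ᶠ w in comap Complex.re atTop, ContDiffAt ℝ 2 U w)
    (hper : Function.Periodic U (2 * π * Complex.I))
    (hlap : Tendsto (lap U) (comap Complex.re atTop) (𝓝 0))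
    (hgrowth : verticalMean (fun w => |U w|) =o[atTop] Real.exp) :
    Tendsto (fun w => U w - verticalMean U w.re) (comap Complex.re atTop) (𝓝 0) := by
  have hsq : Summable fun n : ℤ => 1 / (n : ℝ) ^ 2 := Real.summable_one_div_int_pow.2 one_lt_two
  set C := ∑' n : ℤ, 1 / (n : ℝ) ^ 2
  have hC0 : 0 ≤ C := tsum_nonneg fun n => by positivity
  have hC : 0 < 2 * C + 1 := by linarith
  rw [Metric.tendsto_nhds]
  intro ε hε
  set δ := ε / (2 * C + 1)
  have hδ : 0 < δ := div_pos hε hC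
  obtain ⟨T, hT⟩ := eventually_comap_re_atTop.1 hU
  have hmoment := (eventually_cosMoment_le hU hper hlap hgrowth hδ).and (eventually_gt_atTop T)
  filter_upwards [tendsto_comap.eventually hmoment] with w hw
  have hterm (n : ℤ) : 2 * δ / (n : ℝ) ^ 2 = 2 * δ * (1 / (n : ℝ) ^ 2) := by ring
  have hsum : Summable fun n : ℤ => 2 * δ / (n : ℝ) ^ 2 := by
    simpa only [hterm] using hsq.mul_left (2 * δ)
  calc dist (U w - verticalMean U w.re) 0 = |U w - verticalMean U w.re| := by simp
    _ ≤ ∑' n : ℤ, 2 * δ / (n : ℝ) ^ 2 :=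
        abs_sub_verticalMean_le (fun w' hw' => (hT w' (hw' ▸ hw.2)).continuousAt) hper hsum
          (by simp) hw.1 rfl
    _ = 2 * C * δ := by simp only [hterm, tsum_mul_left]; ring
    _ < ε := by
        rw [← mul_div_assoc, div_lt_iff₀ hC]
        linarith

end

/-! ### The ordinary differential equation `M'' ~ e ^ {2M}` -/

section

variable {M N R : ℝ → ℝ} {a : ℝ}

lemma exists_tendsto_of_deriv_deriv_nonneg
    (hM : ∀ᶠ t in atTop, HasDerivAt M (N t) t) (hN : ∀ᶠ t in atTop, HasDerivAt N (R t) t)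
    (hR : ∀ᶠ t in atTop, 0 ≤ R t) (hbot : Tendsto M atTop atBot) :
    (∀ᶠ t in atTop, N t < 0) ∧ ∃ a, 0 ≤ a ∧ Tendsto N atTop (𝓝 (-a)) := by
  obtain ⟨T, hT⟩ := eventually_atTop.1 (hM.and (hN.and hR))
  have hneg : ∀ t ≥ T, N t < 0 := fun t ht => by
    by_contra! hNt
    obtain ⟨s, hs, hts⟩ := ((hbot.eventually_lt_atBot (M t)).and (eventually_ge_atTop t)).exists
    have := add_mul_sub_le_of_deriv_deriv_nonneg (fun r hr => (hT r (ht.trans hr)).1)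
      (fun r hr => (hT r (ht.trans hr)).2.1) (fun r hr => (hT r (ht.trans hr)).2.2) hts
    linarith [mul_nonneg hNt (sub_nonneg.2 hts)]
  have hmono : MonotoneOn N (Ici T) := monotoneOn_of_hasDerivWithinAt_nonneg (convex_Ici T)
    (fun s hs => (hT s hs).2.1.continuousAt.continuousWithinAt)
    (fun s hs => (hT s (interior_subset hs)).2.1.hasDerivWithinAt)
    (fun s hs => (hT s (interior_subset hs)).2.2)
  have hlim := tendsto_atTop_ciSup (f := fun t => N (max T t))
    (fun s t hst => hmono (le_max_left T s) (le_max_left T t) (max_le_max_left T hst))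
    ⟨0, forall_mem_range.2 fun t => (hneg _ (le_max_left T t)).le⟩
  refine ⟨eventually_atTop.2 ⟨T, hneg⟩, _, neg_nonneg.2 (ciSup_le fun t =>
    (hneg _ (le_max_left T t)).le), ?_⟩
  rw [neg_neg]
  refine hlim.congr' ?_
  filter_upwards [eventually_ge_atTop T] with t ht
  rw [max_eq_right ht]

lemma tendsto_sq_sub_sq_div_exp
    (hM : ∀ᶠ t in atTop, HasDerivAt M (N t) t) (hN : ∀ᶠ t in atTop, HasDerivAt N (R t) t)
    (hR : Tendsto (fun t => R t * Real.exp (-2 * M t)) atTop (𝓝 1))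
    (hbot : Tendsto M atTop atBot) (hneg : ∀ᶠ t in atTop, N t < 0)
    (hlim : Tendsto N atTop (𝓝 (-a))) :
    Tendsto (fun t => (N t ^ 2 - a ^ 2) / Real.exp (2 * M t)) atTop (𝓝 1) := by
  have hnum : ∀ᶠ t in atTop, HasDerivAt (fun t => N t ^ 2 - a ^ 2) (2 * N t * R t) t :=
    hN.mono fun t ht => by simpa using (ht.pow 2).sub_const (a ^ 2)
  have hden : ∀ᶠ t in atTop,
      HasDerivAt (fun t => Real.exp (2 * M t)) (Real.exp (2 * M t) * (2 * N t)) t :=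
    hM.mono fun t ht => (ht.const_mul 2).exp
  refine HasDerivAt.lhopital_zero_atTop hnum hden ?_ ?_ ?_ (hR.congr' ?_)
  · filter_upwards [hneg] with t ht
    exact mul_ne_zero (Real.exp_ne_zero _) (mul_ne_zero two_ne_zero ht.ne)
  · have hzero := (hlim.pow 2).sub_const (a ^ 2)
    rwa [neg_sq, sub_self] at hzero
  · exact Real.tendsto_exp_atBot.comp (hbot.const_mul_atBot two_pos)
  · filter_upwards [hneg] with t ht
    rw [mul_comm (Real.exp _), mul_div_mul_left _ _ (mul_ne_zero two_ne_zero ht.ne), neg_mul,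
      Real.exp_neg, div_eq_mul_inv]

lemma tendsto_div_id_of_tendsto_deriv {f f' : ℝ → ℝ} {L : ℝ}
    (hf : ∀ᶠ t in atTop, HasDerivAt f (f' t) t) (hL : Tendsto f' atTop (𝓝 L)) :
    Tendsto (fun t => f t / t) atTop (𝓝 L) := by
  have hlittle : (fun t => f t - L * t) =o[atTop] fun t => t := by
    refine Asymptotics.isLittleO_iff.2 fun ε hε => ?_
    obtain ⟨T, hT⟩ := eventually_atTop.1
      (hf.and (Metric.tendsto_nhds.1 hL (ε / 2) (by positivity)))
    have hslope : ∀ t ≥ T, ‖(f t - L * t) - (f T - L * T)‖ ≤ ε / 2 * ‖t - T‖ := fun t ht =>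
      (convex_Ici T).norm_image_sub_le_of_norm_hasDerivWithin_le
        (fun s hs => ((hT s hs).1.sub ((hasDerivAt_id s).const_mul L)).hasDerivWithinAt)
        (fun s hs => by simpa [Real.dist_eq] using (hT s hs).2.le) self_mem_Ici ht
    filter_upwards [eventually_ge_atTop T, eventually_ge_atTop 0,
      (tendsto_id.const_mul_atTop (half_pos hε)).eventually_ge_atTop
        (‖f T - L * T‖ - ε / 2 * T)] with t ht ht0 hlarge
    have := norm_le_norm_add_norm_sub' (f t - L * t) (f T - L * T)
    have hs := hslope t ht
    rw [Real.norm_of_nonneg (sub_nonneg.2 ht)] at hs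
    rw [Real.norm_of_nonneg ht0]
    simp only [id] at hlarge
    linarith
  have := hlittle.tendsto_div_nhds_zero.add_const L
  rw [zero_add] at this
  refine this.congr' ?_
  filter_upwards [eventually_gt_atTop 0] with t ht
  field_simp
  ring

lemma tendsto_add_log_of_sq_div_exp (hM : ∀ᶠ t in atTop, HasDerivAt M (N t) t)
    (hneg : ∀ᶠ t in atTop, N t < 0)
    (hsq : Tendsto (fun t => N t ^ 2 / Real.exp (2 * M t)) atTop (𝓝 1)) :
    Tendsto (fun t => M t + Real.log t) atTop (𝓝 0) := by
  have hderiv : Tendsto (fun t => Real.exp (-M t) * -N t) atTop (𝓝 1) := by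
    have := hsq.sqrt
    rw [Real.sqrt_one] at this
    refine this.congr' ?_
    filter_upwards [hneg] with t ht
    have hexp : Real.exp (2 * M t) = Real.exp (M t) ^ 2 := by rw [two_mul, Real.exp_add, sq]
    rw [hexp, ← div_pow, Real.sqrt_sq_eq_abs, abs_div, Real.abs_exp, abs_of_neg ht, Real.exp_neg,
      div_eq_inv_mul]
  have hdiv := tendsto_div_id_of_tendsto_deriv (hM.mono fun t ht => ht.neg.exp) hderiv
  have hlog := (hdiv.log one_ne_zero).neg
  rw [Real.log_one, neg_zero] at hlog
  refine hlog.congr' ?_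
  filter_upwards [eventually_gt_atTop 0] with t ht
  rw [Real.log_div (Real.exp_ne_zero _) ht.ne', Pi.neg_apply, Real.log_exp]
  ring

lemma exists_tendsto_add_mul_of_sq_sub_sq_div_exp (ha : 0 < a)
    (hM : ∀ᶠ t in atTop, HasDerivAt M (N t) t) (hN : ∀ᶠ t in atTop, HasDerivAt N (R t) t)
    (hneg : ∀ᶠ t in atTop, N t < 0) (hlim : Tendsto N atTop (𝓝 (-a)))
    (hsq : Tendsto (fun t => (N t ^ 2 - a ^ 2) / Real.exp (2 * M t)) atTop (𝓝 1)) :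
    ∃ c, Tendsto (fun t => M t + a * t) atTop (𝓝 c) := by
  have hMt := tendsto_div_id_of_tendsto_deriv hM hlim
  have hO : (fun t => N t + a) =O[atTop] fun t => Real.exp (-a * t) := by
    refine Asymptotics.IsBigO.of_bound (2 / a) ?_
    filter_upwards [hneg, hsq.abs.eventually_le_const (by norm_num : |(1 : ℝ)| < 2),
      hMt.eventually_le_const (by linarith : -a < -a / 2), eventually_gt_atTop 0]
      with t hNt hsqt hMt ht
    rw [div_le_iff₀ ht] at hMt
    rw [abs_div, Real.abs_exp, div_le_iff₀ (Real.exp_pos _)] at hsqt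
    have hfactor : |N t ^ 2 - a ^ 2| = |N t + a| * |N t - a| := by
      rw [← abs_mul]; congr 1; ring
    have hgap : a ≤ |N t - a| := by
      rw [abs_sub_comm]; exact (by linarith : a ≤ a - N t).trans (le_abs_self _)
    rw [Real.norm_eq_abs, Real.norm_eq_abs, Real.abs_exp, div_mul_eq_mul_div, le_div_iff₀ ha]
    calc |N t + a| * a ≤ |N t ^ 2 - a ^ 2| := by rw [hfactor]; gcongr
      _ ≤ 2 * Real.exp (2 * M t) := hsqt
      _ ≤ 2 * Real.exp (-a * t) :=
        mul_le_mul_of_nonneg_left (Real.exp_le_exp.2 (by linarith)) two_pos.le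
  obtain ⟨T, hT⟩ := eventually_atTop.1 (hM.and hN)
  have hint := integrable_of_isBigO_exp_neg (a := T) ha
    (fun t ht => ((hT t ht).2.add_const a).continuousAt.continuousWithinAt) hO
  exact ⟨_, MeasureTheory.tendsto_limUnder_of_hasDerivAt_of_integrableOn_Ioi
    (fun t ht => (hT t (le_of_lt ht)).1.add (by simpa using (hasDerivAt_id t).const_mul a)) hint⟩

theorem tendsto_dichotomy_of_deriv_deriv_exp
    (hM : ∀ᶠ t in atTop, HasDerivAt M (N t) t) (hN : ∀ᶠ t in atTop, HasDerivAt N (R t) t)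
    (hR : Tendsto (fun t => R t * Real.exp (-2 * M t)) atTop (𝓝 1)) (hbot : Tendsto M atTop atBot) :
    (∃ a > 0, ∃ c, Tendsto (fun t => M t + a * t) atTop (𝓝 c)) ∨
      Tendsto (fun t => M t + Real.log t) atTop (𝓝 0) := by
  have hRnonneg : ∀ᶠ t in atTop, 0 ≤ R t := (hR.eventually_const_lt one_pos).mono fun t ht =>
    (pos_of_mul_pos_left ht (Real.exp_pos _).le).le
  obtain ⟨hneg, a, ha, hlim⟩ := exists_tendsto_of_deriv_deriv_nonneg hM hN hRnonneg hbot
  have hsq := tendsto_sq_sub_sq_div_exp hM hN hR hbot hneg hlim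
  rcases ha.eq_or_lt with rfl | ha
  · exact .inr (tendsto_add_log_of_sq_div_exp hM hneg (by simpa using hsq))
  · exact .inl ⟨a, ha, exists_tendsto_add_mul_of_sq_sub_sq_div_exp ha hM hN hneg hlim hsq⟩

end

/-! ### The equation on a half-plane -/

section

variable {U H : ℂ → ℝ}

lemma tendsto_verticalMean_lap_mul_exp (hU : ∀ᶠ w in comap Complex.re atTop, ContDiffAt ℝ 2 U w)
    (hpde : ∀ᶠ w in comap Complex.re atTop, lap U w = H w * Real.exp (2 * U w))
    (hH : Tendsto H (comap Complex.re atTop) (𝓝 1))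
    (hosc : Tendsto (fun w => U w - verticalMean U w.re) (comap Complex.re atTop) (𝓝 0)) :
    Tendsto (fun t => verticalMean (lap U) t * Real.exp (-2 * verticalMean U t)) atTop (𝓝 1) := by
  obtain ⟨T, hT⟩ := eventually_comap_re_atTop.1 hU
  set f : ℂ → ℝ := fun w => lap U w * Real.exp (-2 * verticalMean U w.re)
  have hlim : Tendsto f (comap Complex.re atTop) (𝓝 1) := by
    have := hH.mul (hosc.const_mul 2).rexp
    rw [mul_zero, Real.exp_zero, mul_one] at this
    refine this.congr' ?_
    filter_upwards [hpde] with w hw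
    simp only [f]
    rw [hw, mul_assoc, ← Real.exp_add]
    ring_nf
  have hcont : ∀ᶠ w in comap Complex.re atTop, ContinuousAt f w :=
    eventually_comap_re_atTop.2 ⟨T, fun w hw => (continuousAt_lap (hT w hw)).mul
      ((((hasDerivAt_verticalMean (fun w' hw' => (hT w' hw').of_le one_le_two) hw).continuousAt.comp
        continuous_re.continuousAt).const_mul (-2)).rexp)⟩
  refine (tendsto_verticalMean hcont hlim).congr fun t => ?_
  have hre (θ : ℝ) : (t + θ * Complex.I).re = t := by simp
  simp only [f, verticalMean, hre, intervalIntegral.integral_mul_const, mul_assoc]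

lemma tendsto_verticalMean_atBot (hbot : Tendsto U (comap Complex.re atTop) atBot)
    (hosc : Tendsto (fun w => U w - verticalMean U w.re) (comap Complex.re atTop) (𝓝 0)) :
    Tendsto (verticalMean U) atTop atBot := by
  have hreal : Tendsto ((↑) : ℝ → ℂ) atTop (comap Complex.re atTop) :=
    tendsto_comap_iff.2 tendsto_id
  refine ((hbot.atBot_add hosc.neg).comp hreal).congr fun t => ?_
  simp only [Function.comp_apply, ofReal_re]
  ring

lemma tendsto_add_comp_re {g : ℝ → ℝ} {c : ℝ}
    (hosc : Tendsto (fun w => U w - verticalMean U w.re) (comap Complex.re atTop) (𝓝 0))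
    (hmean : Tendsto (fun t => verticalMean U t + g t) atTop (𝓝 c)) :
    Tendsto (fun w => U w + g w.re) (comap Complex.re atTop) (𝓝 c) := by
  have := hosc.add (hmean.comp tendsto_comap)
  rw [zero_add] at this
  refine this.congr fun w => ?_
  simp only [Function.comp_apply]
  ring

theorem tendsto_dichotomy_of_lap_eq_mul_exp
    (hU : ∀ᶠ w in comap Complex.re atTop, ContDiffAt ℝ 2 U w)
    (hper : Function.Periodic U (2 * π * Complex.I))
    (hpde : ∀ᶠ w in comap Complex.re atTop, lap U w = H w * Real.exp (2 * U w))
    (hH : Tendsto H (comap Complex.re atTop) (𝓝 1)) :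
    (∃ a > 0, ∃ c, Tendsto (fun w => U w + a * w.re) (comap Complex.re atTop) (𝓝 c)) ∨
      Tendsto (fun w => U w + Real.log w.re) (comap Complex.re atTop) (𝓝 0) := by
  have hlower : ∀ᶠ w in comap Complex.re atTop, 1 / 2 * Real.exp (2 * U w) ≤ lap U w := by
    filter_upwards [hpde, hH.eventually_const_le one_half_lt_one] with w hw hHw
    rw [hw]
    gcongr
  have hbot := tendsto_atBot_of_mul_exp_le_lap one_half_pos hU hlower
  have hlap : Tendsto (lap U) (comap Complex.re atTop) (𝓝 0) := by
    have := hH.mul (Real.tendsto_exp_atBot.comp (hbot.const_mul_atBot two_pos))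
    rw [mul_zero] at this
    exact this.congr' (hpde.mono fun w hw => hw.symm)
  have hosc := tendsto_sub_verticalMean hU hper hlap
    (verticalMean_abs_isLittleO_exp hper hU (hbot.eventually_le_atBot 0)
      (hlower.mono fun w hw => le_trans (by positivity) hw))
  obtain ⟨T, hT⟩ := eventually_comap_re_atTop.1 hU
  have hM : ∀ᶠ t in atTop, HasDerivAt (verticalMean U) (verticalMean (pdx U) t) t :=
    (eventually_gt_atTop T).mono fun t ht =>
      hasDerivAt_verticalMean (fun w hw => (hT w hw).of_le one_le_two) ht
  have hN : ∀ᶠ t in atTop, HasDerivAt (verticalMean (pdx U)) (verticalMean (lap U) t) t :=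
    (eventually_gt_atTop T).mono fun t ht => hasDerivAt_verticalMean_pdx hper hT ht
  refine (tendsto_dichotomy_of_deriv_deriv_exp hM hN
    (tendsto_verticalMean_lap_mul_exp hU hpde hH hosc)
    (tendsto_verticalMean_atBot hbot hosc)).imp ?_ fun hlog => tendsto_add_comp_re hosc hlog
  rintro ⟨a, ha, c, hc⟩
  exact ⟨a, ha, c, tendsto_add_comp_re hosc hc⟩

end

/-! ### The equation on the punctured disc -/

lemma isOpen_PDisc : IsOpen PDisc :=
  (isOpen_lt continuous_const continuous_norm).inter (isOpen_lt continuous_norm continuous_const)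

lemma PDisc_eq_ball_diff : PDisc = Metric.ball (0 : ℂ) 1 \ {0} := by
  ext z
  simp [PDisc, and_comm]

lemma exp_neg_mem_PDisc {w : ℂ} (hw : 0 < w.re) : Complex.exp (-w) ∈ PDisc :=
  ⟨norm_pos_iff.2 (Complex.exp_ne_zero _), by simpa [Complex.norm_exp] using hw⟩

lemma tendsto_exp_neg_comap_re :
    Tendsto (fun w : ℂ => Complex.exp (-w)) (comap Complex.re atTop) (𝓝 0) := by
  refine Complex.tendsto_exp_comap_re_atBot.comp (tendsto_comap_iff.2 ?_)
  exact tendsto_neg_atTop_atBot.comp tendsto_comap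

lemma tendsto_neg_log_comap_re :
    Tendsto (fun z : ℂ => -Complex.log z) (𝓝[≠] 0) (comap Complex.re atTop) := by
  rw [tendsto_comap_iff]
  have hlog : Tendsto (fun z : ℂ => -Real.log ‖z‖) (𝓝[≠] 0) atTop :=
    tendsto_neg_atBot_atTop.comp (Real.tendsto_log_nhdsGT_zero.comp tendsto_norm_nhdsNE_zero)
  exact hlog.congr fun z => by rw [Function.comp_apply, neg_re, Complex.log_re]

lemma exists_continuousOn_ball_of_tendsto {X : Type*} [TopologicalSpace X] {f : ℂ → X} {L : X}
    (hf : ContinuousOn f PDisc) (hL : Tendsto f (𝓝[≠] 0) (𝓝 L)) :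
    ∃ v : ℂ → X, ContinuousOn v (Metric.ball (0 : ℂ) 1) ∧ (∀ z ∈ PDisc, v z = f z) ∧ v 0 = L := by
  refine ⟨Function.update f 0 L, continuousOn_update_iff.2 ⟨?_, fun _ => ?_⟩, fun z hz => ?_,
    Function.update_self ..⟩
  · rwa [← PDisc_eq_ball_diff]
  · exact hL.mono_left (nhdsWithin_mono _ fun z hz => hz.2)
  · exact Function.update_of_ne (norm_pos_iff.1 hz.1) ..

/-- The function `u` in the logarithmic coordinate `w = -log z`, normalised so that
`Δu = 16 (|z| ^ α ρ) ^ 2 e ^ {2u}` becomes `ΔU = (ρ / ρ₀) ^ 2 e ^ {2U}`. -/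
noncomputable def logLift (u : ℂ → ℝ) (α ρ₀ : ℝ) (w : ℂ) : ℝ :=
  u (Complex.exp (-w)) + (-(α + 1) * w.re + Real.log (4 * ρ₀))

lemma logLift_periodic (u : ℂ → ℝ) (α ρ₀ : ℝ) :
    Function.Periodic (logLift u α ρ₀) (2 * π * Complex.I) := fun w => by
  have hexp : Complex.exp (-(w + 2 * π * Complex.I)) = Complex.exp (-w) := by
    rw [neg_add, ← sub_eq_add_neg, Complex.exp_periodic.sub_eq]
  rw [logLift, logLift, hexp]
  simp

lemma logLift_neg_log (u : ℂ → ℝ) (α ρ₀ : ℝ) {z : ℂ} (hz : z ≠ 0) :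
    logLift u α ρ₀ (-Complex.log z) = u z + (α + 1) * Real.log ‖z‖ + Real.log (4 * ρ₀) := by
  rw [logLift, neg_neg, Complex.exp_log hz, neg_re, Complex.log_re]
  ring

lemma contDiffAt_logLift {u : ℂ → ℝ} {w : ℂ} (hu : ContDiffAt ℝ 2 u (Complex.exp (-w)))
    (α ρ₀ : ℝ) : ContDiffAt ℝ 2 (logLift u α ρ₀) w :=
  (contDiffAt_comp_analytic (φ := fun w => Complex.exp (-w)) hu (by fun_prop)).add
    (contDiff_affine_re _ _).contDiffAt

lemma lap_logLift {u : ℂ → ℝ} {w : ℂ} {α r ρ₀ : ℝ} (hu : ContDiffAt ℝ 2 u (Complex.exp (-w)))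
    (hρ₀ : 0 < ρ₀) (hpde : lap u (Complex.exp (-w))
      = 16 * (‖Complex.exp (-w)‖ ^ α * r) ^ 2 * Real.exp (2 * u (Complex.exp (-w)))) :
    lap (logLift u α ρ₀) w = (r / ρ₀) ^ 2 * Real.exp (2 * logLift u α ρ₀ w) := by
  have hφ : AnalyticAt ℂ (fun w => Complex.exp (-w)) w := by fun_prop
  have hderiv : ‖deriv (fun w => Complex.exp (-w)) w‖ = Real.exp (-w.re) := by
    rw [(hasDerivAt_neg w).cexp.deriv]
    simp [Complex.norm_exp]
  have hexp : Real.exp (2 * logLift u α ρ₀ w) = (4 * ρ₀) ^ 2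
      * (Real.exp (-w.re) * Real.exp (-w.re * α)) ^ 2 * Real.exp (2 * u (Complex.exp (-w))) := by
    rw [← Real.exp_log (by positivity : 0 < 4 * ρ₀)]
    simp only [sq, ← Real.exp_add, logLift]
    ring_nf
  have hsplit : lap (logLift u α ρ₀) w = lap (u ∘ fun w => Complex.exp (-w)) w + 0 := by
    rw [← lap_affine_re (-(α + 1)) (Real.log (4 * ρ₀)) w]
    exact lap_add (contDiffAt_comp_analytic hu hφ) (contDiff_affine_re _ _).contDiffAt
  rw [hsplit, lap_comp_analytic (φ := fun w => Complex.exp (-w)) hu hφ, hpde, hderiv, hexp,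
    Complex.norm_exp, neg_re, ← Real.exp_mul]
  field_simp
  ring

lemma continuousOn_add_mul_log_norm {u : ℂ → ℝ} (hu : ContinuousOn u PDisc) (β : ℝ) :
    ContinuousOn (fun z => u z + β * Real.log ‖z‖) PDisc :=
  hu.add (continuousOn_const.mul
    (continuous_norm.continuousOn.log fun _ hz => hz.1.ne'))

lemma continuousOn_log_abs_log_norm : ContinuousOn (fun z : ℂ => Real.log |Real.log ‖z‖|) PDisc :=
  (continuous_norm.continuousOn.log fun _ hz => hz.1.ne').abs.log fun _ hz =>
    abs_ne_zero.2 (Real.log_neg hz.1 hz.2).ne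

theorem tendsto_dichotomy_of_lap_eq {α : ℝ} {ρ u : ℂ → ℝ} (hρ : ContinuousAt ρ 0)
    (hρ0 : 0 < ρ 0) (hu : ContDiffOn ℝ 2 u PDisc)
    (hpde : ∀ z ∈ PDisc, lap u z = 16 * (‖z‖ ^ α * ρ z) ^ 2 * Real.exp (2 * u z)) :
    (∃ β < α + 1, ∃ c, Tendsto (fun z => u z + β * Real.log ‖z‖) (𝓝[≠] 0) (𝓝 c)) ∨
      Tendsto (fun z => u z + (α + 1) * Real.log ‖z‖ + Real.log |Real.log ‖z‖|) (𝓝[≠] 0)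
        (𝓝 (-2 * Real.log 2 - Real.log (ρ 0))) := by
  have hmem : ∀ᶠ w in comap Complex.re atTop, Complex.exp (-w) ∈ PDisc :=
    eventually_comap_re_atTop.2 ⟨0, fun w hw => exp_neg_mem_PDisc hw⟩
  have hu2 {z : ℂ} (hz : z ∈ PDisc) : ContDiffAt ℝ 2 u z :=
    hu.contDiffAt (isOpen_PDisc.mem_nhds hz)
  have hratio : Tendsto (fun w => (ρ (Complex.exp (-w)) / ρ 0) ^ 2) (comap Complex.re atTop)
      (𝓝 1) := by
    have := ((hρ.tendsto.comp tendsto_exp_neg_comap_re).div_const (ρ 0)).pow 2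
    rwa [div_self hρ0.ne', one_pow] at this
  refine (tendsto_dichotomy_of_lap_eq_mul_exp (U := logLift u α (ρ 0))
    (hmem.mono fun w hw => contDiffAt_logLift (hu2 hw) _ _) (logLift_periodic _ _ _)
    (hmem.mono fun w hw => lap_logLift (hu2 hw) hρ0 (hpde _ hw)) hratio).imp ?_ fun hlog => ?_
  · rintro ⟨a, ha, c, hc⟩
    refine ⟨α + 1 - a, sub_lt_self _ ha, c - Real.log (4 * ρ 0), ?_⟩
    refine ((hc.comp tendsto_neg_log_comap_re).sub_const _).congr' ?_
    filter_upwards [self_mem_nhdsWithin] with z hz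
    rw [Function.comp_apply, logLift_neg_log _ _ _ hz, neg_re, Complex.log_re]
    ring
  · have hvalue : -2 * Real.log 2 - Real.log (ρ 0) = 0 - Real.log (4 * ρ 0) := by
      rw [Real.log_mul four_ne_zero hρ0.ne', show (4 : ℝ) = 2 ^ 2 by norm_num, Real.log_pow]
      push_cast
      ring
    rw [hvalue]
    refine ((hlog.comp tendsto_neg_log_comap_re).sub_const _).congr' ?_
    filter_upwards [self_mem_nhdsWithin] with z hz
    rw [Function.comp_apply, logLift_neg_log _ _ _ hz, neg_re, Complex.log_re,
      Real.log_neg_eq_log, Real.log_abs]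
    ring

theorem stmt0_general {α : ℝ} {ρ u : ℂ → ℝ} (hρ : ContinuousAt ρ 0) (hρ0 : 0 < ρ 0)
    (hu : ContDiffOn ℝ 2 u PDisc)
    (hpde : ∀ z ∈ PDisc, lap u z = 16 * (‖z‖ ^ α * ρ z) ^ 2 * Real.exp (2 * u z)) :
    (∃ β : ℝ, β < α + 1 ∧ ∃ v : ℂ → ℝ,
        ContinuousOn v (Metric.ball (0 : ℂ) 1) ∧
        ∀ z ∈ PDisc, v z = u z + β * Real.log ‖z‖) ∨
    (∃ v : ℂ → ℝ,
        ContinuousOn v (Metric.ball (0 : ℂ) 1) ∧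
        (∀ z ∈ PDisc, v z = u z + (α + 1) * Real.log ‖z‖ + Real.log |Real.log ‖z‖|) ∧
        v 0 = -2 * Real.log 2 - Real.log (ρ 0)) := by
  have hcont (β : ℝ) := continuousOn_add_mul_log_norm hu.continuousOn β
  refine (tendsto_dichotomy_of_lap_eq hρ hρ0 hu hpde).imp ?_ fun hlog =>
    exists_continuousOn_ball_of_tendsto ((hcont _).add continuousOn_log_abs_log_norm) hlog
  rintro ⟨β, hβ, c, hc⟩
  obtain ⟨v, hv, hvu, -⟩ := exists_continuousOn_ball_of_tendsto (hcont β) hc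
  exact ⟨β, hβ, v, hv, hvu⟩

theorem stmt0 (Ξ₀ G : ℂ → ℂ) (n : ℤ)
    (hΞhol : DifferentiableOn ℂ Ξ₀ PDisc)
    (hGhol : DifferentiableOn ℂ G (Metric.ball (0 : ℂ) 1))
    (hG0 : G 0 ≠ 0)
    (hord : ∀ z ∈ PDisc, Ξ₀ z = z ^ n * G z)
    (u : ℂ → ℝ) (hu : ContDiffOn ℝ 2 u PDisc)
    (hpde : ∀ z ∈ PDisc, lap u z = 16 * ‖Ξ₀ z‖ ^ 2 * Real.exp (2 * u z)) :
    (∃ β : ℝ, β < (n : ℝ) + 1 ∧ ∃ v : ℂ → ℝ,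
        ContinuousOn v (Metric.ball (0 : ℂ) 1) ∧
        ∀ z ∈ PDisc, v z = u z + β * Real.log ‖z‖) ∨
    (∃ v : ℂ → ℝ,
        ContinuousOn v (Metric.ball (0 : ℂ) 1) ∧
        (∀ z ∈ PDisc, v z = u z + ((n : ℝ) + 1) * Real.log ‖z‖ + Real.log |Real.log ‖z‖|) ∧
        v 0 = -2 * Real.log 2 - Real.log ‖G 0‖) :=
  stmt0_general (ρ := fun z => ‖G z‖)
    (hGhol.continuousOn.continuousAt (Metric.ball_mem_nhds 0 one_pos)).norm (norm_pos_iff.2 hG0) hu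
    fun z hz => by rw [hpde z hz, hord z hz, norm_mul, norm_zpow, Real.rpow_intCast]
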